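/- Let f be the local rule of width 3 given by f(x_1,x_2,x_3) = x_2 + min{x_1, 1−x_2} − min{x_2, 1−x_3} (rule 184), and define g : ℤ^2 → ℤ by g(s_1,s_2) = s_1 + min{s_2 − s_1 − 1, 1}. Then for every strictly increasing s : ℤ → ℤ, the function t : ℤ → ℤ with t_i = g(s_i, s_{i+1}) is strictly increasing, and for all i ∈ ℤ, φ(t)_i = f(φ(s)_{i−1}, φ(s)_i, φ(s)_{i+1}). -/

import Mathlib

/-- For a (strictly increasing) `s : ℤ → ℤ`, `phi s` is the occupancy bisequence:
`phi s i = 1` iff `i` lies in the range of `s`. -/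
noncomputable def phi (s : ℤ → ℤ) (i : ℤ) : Fin 2 :=
  haveI := Classical.propDecidable (i ∈ Set.range s)
  if i ∈ Set.range s then 1 else 0

/-- The particle mapping for rule 184: `g(s₁,s₂) = s₁ + min{s₂ - s₁ - 1, 1}`. -/
def g184 (s1 s2 : ℤ) : ℤ := s1 + min (s2 - s1 - 1) 1

/-- For rule 184, `f(x₁,x₂,x₃) = x₂ + min{x₁,1-x₂} - min{x₂,1-x₃}` (arithmetic
in `ℤ`), and `g(s₁,s₂) = s₁ + min{s₂-s₁-1,1}`: for every strictly increasing
`s : ℤ → ℤ`, the bisequence `t i = g (s i) (s (i+1))` is strictly increasing and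
`φ(t)ᵢ = f(φ(s)_{i-1}, φ(s)ᵢ, φ(s)_{i+1})` for all `i`. -/
theorem stmt_12 (s : ℤ → ℤ) (hs : StrictMono s) :
    StrictMono (fun i : ℤ => g184 (s i) (s (i + 1))) ∧
    ∀ i : ℤ,
      (((phi (fun i : ℤ => g184 (s i) (s (i + 1))) i) : ℕ) : ℤ) =
        ((phi s i : ℕ) : ℤ)
          + min ((phi s (i - 1) : ℕ) : ℤ) (1 - ((phi s i : ℕ) : ℤ))
          - min ((phi s i : ℕ) : ℤ) (1 - ((phi s (i + 1) : ℕ) : ℤ)) := by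
  have key : ∀ j k : ℤ, s k = s j + 1 → s (j + 1) = s j + 1 := by
    intro j k h
    have h1 : j < k := hs.lt_iff_lt.mp (by omega)
    have h2 : s (j + 1) ≤ s k := hs.monotone (by omega)
    have h3 : s j < s (j + 1) := hs (by omega)
    omega
  have hval : ∀ (u : ℤ → ℤ) (i : ℤ), i ∈ Set.range u → ((phi u i : ℕ) : ℤ) = 1 := by
    intro u i h
    simp only [phi, if_pos h]
    rfl
  have hval0 : ∀ (u : ℤ → ℤ) (i : ℤ), i ∉ Set.range u → ((phi u i : ℕ) : ℤ) = 0 := by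
    intro u i h
    simp only [phi, if_neg h]
    rfl
  constructor
  · apply strictMono_int_of_lt_succ
    intro i
    have h1 : s i < s (i + 1) := hs (by omega)
    have h2 : s (i + 1) < s (i + 1 + 1) := hs (by omega)
    simp only [g184]
    omega
  · intro i
    have hiff : i ∈ Set.range (fun i : ℤ => g184 (s i) (s (i + 1))) ↔
        (i ∈ Set.range s ∧ i + 1 ∈ Set.range s) ∨
          (i - 1 ∈ Set.range s ∧ i ∉ Set.range s) := by
      constructor
      · rintro ⟨j, hj⟩
        have h1 : s j < s (j + 1) := hs (by omega)
        simp only [g184] at hj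
        by_cases h : s (j + 1) = s j + 1
        · left
          exact ⟨⟨j, by omega⟩, ⟨j + 1, by omega⟩⟩
        · right
          refine ⟨⟨j, by omega⟩, ?_⟩
          rintro ⟨k, hk⟩
          exact h (key j k (by omega))
      · rintro (⟨⟨j, hj⟩, ⟨k, hk⟩⟩ | ⟨⟨j, hj⟩, h⟩)
        · have := key j k (by omega)
          refine ⟨j, ?_⟩
          simp only [g184]
          omega
        · have h1 : s j < s (j + 1) := hs (by omega)
          have h2 : s (j + 1) ≠ i := fun e => h ⟨j + 1, e⟩
          refine ⟨j, ?_⟩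
          simp only [g184]
          omega
    by_cases ha : i - 1 ∈ Set.range s <;> by_cases hb : i ∈ Set.range s <;>
      by_cases hc : i + 1 ∈ Set.range s <;>
      by_cases ht : i ∈ Set.range (fun i : ℤ => g184 (s i) (s (i + 1))) <;>
      first
      | (exfalso; tauto)
      | (simp only [hval _ _, hval0 _ _, ha, hb, hc, ht, not_false_eq_true]; norm_num)
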